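/- Let m ≥ 2, δ ≥ 2, n = m·δ, and V = 𝔽₂ⁿ, identified with ℤ/2ⁿℤ by binary expansion (the vector (a₀,…,a_{n−1}) corresponding to Σ a_i 2^i); write v ⊞ k for the addition modulo 2ⁿ transported to V, and σ_k : V → V, v ↦ v ⊞ k. Let γ : V → V be a parallel S-box: γ(x₁,…,x_δ) = (γ₁(x₁),…,γ_δ(x_δ)) with each γ_j a bijection of the brick 𝔽₂^m satisfying γ_j(0) ≠ 0. Let λ : V → V be a bijective 𝔽₂-linear map which preserves no non-trivial type, i.e. for every subset D ⊆ V in standard form of non-trivial type, the type of Dλ differs from the type of D. Then the subgroup Γ∞ of Sym(V) generated by the round functions {v ↦ σ_k(λ(γ(v))) : k ∈ V} is primitive: it acts transitively on V, and every Γ∞-invariant partition of V is either {V} or the partition into singletons. -/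

import Mathlib

/-!
The group contains every translation `v ↦ v ⊞ k`, each being a quotient of two round functions;
hence it is transitive.  For the same reason the class of `0` in an invariant partition is a
subgroup of the cyclic group `ℤ/2ⁿℤ`, hence `2ᵗ(ℤ/2ⁿℤ)` for some `t ≤ n` (`subgroup_eq`), and the
classes are its cosets.  In terms of binary digits they are the sets obtained by prescribing the
first `t` coordinates (`dvd_iff`).

If `t = 0` or `t = n` the partition is trivial.  Otherwise each class is in standard form, with
`t / m` white boxes and one ruled box exactly when `m ∤ t` (`cyl_eq_stdSet`, `image_stdForm`), so
all classes have the same non-trivial type, which is also the type of their images under `γ`.  For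
a class `C`, the set `D = γ(C)` is thus in standard form, while `λ(D)` is again a class, hence has
the same type as `D`: this contradicts the hypothesis on `λ`.
-/

open Matrix

/-- The index in `Fin (m * δ)` of the `i`-th coordinate of the `j`-th brick. -/
def brickIdx (m δ : ℕ) (j : Fin δ) (i : Fin m) : Fin (m * δ) :=
  ⟨m * j.val + i.val, by
    have h1 : m * j.val + i.val < m * (j.val + 1) := by
      rw [Nat.mul_succ]
      exact Nat.add_lt_add_left i.isLt _
    exact lt_of_lt_of_le h1 (Nat.mul_le_mul le_rfl j.isLt)⟩

/-- The projection of a vector on its `j`-th brick. -/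
def brickProj (m δ : ℕ) (v : Fin (m * δ) → ZMod 2) (j : Fin δ) : Fin m → ZMod 2 :=
  fun i => v (brickIdx m δ j i)

/-- The `j`-th box of a subset `D`: the projection of `D` on the `j`-th brick. -/
def box (m δ : ℕ) (D : Set (Fin (m * δ) → ZMod 2)) (j : Fin δ) : Set (Fin m → ZMod 2) :=
  (fun v => brickProj m δ v j) '' D

/-- A box is white if it is a singleton. -/
def IsWhite {α : Type*} (S : Set α) : Prop := ∃ a, S = {a}

/-- A box is black if it is everything. -/
def IsBlack {α : Type*} (S : Set α) : Prop := S = Set.univ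

/-- A box is ruled if it is neither white nor black. -/
def IsRuled {α : Type*} (S : Set α) : Prop := ¬ IsWhite S ∧ ¬ IsBlack S

/-- The set `{v_w} × R × 𝔽₂^{m·n_b}` in standard form: the first `nw` bricks are fixed
(equal to `w`), the brick number `nw` (0-indexed) lies in `R` when `nr = 1`, and the
remaining bricks are free. -/
def StdSet (m δ nw nr : ℕ) (w : Fin δ → Fin m → ZMod 2) (R : Set (Fin m → ZMod 2)) :
    Set (Fin (m * δ) → ZMod 2) :=
  { v | (∀ j : Fin δ, (j : ℕ) < nw → brickProj m δ v j = w j) ∧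
        (nr = 1 → ∀ j : Fin δ, (j : ℕ) = nw → brickProj m δ v j ∈ R) }

/-- `D` is in standard form of type `(nw, nr, nb)`. -/
def StdForm (m δ : ℕ) (D : Set (Fin (m * δ) → ZMod 2)) (nw nr nb : ℕ) : Prop :=
  nw + nr + nb = δ ∧ nr ≤ 1 ∧
  ∃ (w : Fin δ → Fin m → ZMod 2) (R : Set (Fin m → ZMod 2)),
    (nr = 1 → 2 ≤ R.ncard ∧ R.ncard ≤ 2 ^ m - 1) ∧ D = StdSet m δ nw nr w R

/-- `D` has type `(nw, nr, nb)`: its first `nw` boxes are white, the next `nr` boxes are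
ruled, and its last `nb` boxes are black. -/
def HasType (m δ : ℕ) (D : Set (Fin (m * δ) → ZMod 2)) (nw nr nb : ℕ) : Prop :=
  nw + nr + nb = δ ∧ nr ≤ 1 ∧
  ∀ j : Fin δ,
    ((j : ℕ) < nw → IsWhite (box m δ D j)) ∧
    (nw ≤ (j : ℕ) → (j : ℕ) < nw + nr → IsRuled (box m δ D j)) ∧
    (nw + nr ≤ (j : ℕ) → IsBlack (box m δ D j))

/-- `D` and `E` have the same type: corresponding boxes have the same kind. -/
def SameType (m δ : ℕ) (D E : Set (Fin (m * δ) → ZMod 2)) : Prop :=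
  ∀ j : Fin δ,
    (IsWhite (box m δ D j) ↔ IsWhite (box m δ E j)) ∧
    (IsBlack (box m δ D j) ↔ IsBlack (box m δ E j))

lemma m_le_mul (m d : ℕ) (h : 1 ≤ d) : m ≤ m * d := by
  calc m = m * 1 := (Nat.mul_one m).symm
  _ ≤ m * d := Nat.mul_le_mul le_rfl h

lemma shift_lt (m δ a : ℕ) (ha : a ≤ δ) (k : ℕ) (hk : k < m * (δ - a)) :
    m * a + k < m * δ := by
  have h := Nat.add_lt_add_left hk (m * a)
  rwa [← Nat.mul_add, Nat.add_sub_cancel' ha] at h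

/-- The index in `Fin (m * δ)` obtained by skipping the first `a` bricks. -/
def shiftIdx (m δ a : ℕ) (ha : a ≤ δ) (k : Fin (m * (δ - a))) : Fin (m * δ) :=
  ⟨m * a + k.val, shift_lt m δ a ha k.val k.isLt⟩

/-- The submatrix `Λ_{(a+1,b+1):(δ,δ)}` (blocks with row brick ≥ a and column brick ≥ b). -/
def subBlock (m δ : ℕ) (Λ : Matrix (Fin (m * δ)) (Fin (m * δ)) (ZMod 2))
    (a b : ℕ) (ha : a ≤ δ) (hb : b ≤ δ) :
    Matrix (Fin (m * (δ - a))) (Fin (m * (δ - b))) (ZMod 2) :=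
  Matrix.of fun r c => Λ (shiftIdx m δ a ha r) (shiftIdx m δ b hb c)

/-- The column of blocks `Λ_{(a+1,j+1):(δ,j+1)}` (row bricks ≥ a, column brick j). -/
def subColBlock (m δ : ℕ) (Λ : Matrix (Fin (m * δ)) (Fin (m * δ)) (ZMod 2))
    (a : ℕ) (ha : a ≤ δ) (j : Fin δ) :
    Matrix (Fin (m * (δ - a))) (Fin m) (ZMod 2) :=
  Matrix.of fun r c => Λ (shiftIdx m δ a ha r) (brickIdx m δ j c)

/-- The row of blocks `Λ_{(j+1,1):(j+1,c2)}` (row brick j, column bricks < c2). -/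
def rowBlock (m δ : ℕ) (Λ : Matrix (Fin (m * δ)) (Fin (m * δ)) (ZMod 2))
    (j : Fin δ) (c2 : ℕ) (hc : c2 ≤ δ) :
    Matrix (Fin m) (Fin (m * c2)) (ZMod 2) :=
  Matrix.of fun i c => Λ (brickIdx m δ j i) (Fin.castLE (Nat.mul_le_mul le_rfl hc) c)

/-- The block `Λ_{j+1, j'+1}`. -/
def block (m δ : ℕ) (Λ : Matrix (Fin (m * δ)) (Fin (m * δ)) (ZMod 2)) (j j' : Fin δ) :
    Matrix (Fin m) (Fin m) (ZMod 2) :=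
  Matrix.of fun i i' => Λ (brickIdx m δ j i) (brickIdx m δ j' i')

/-- The set `R × 𝔽₂^{m (d-1)}` of vectors of `d` bricks whose first brick lies in `R`. -/
def rulDomain (m d : ℕ) (hd : 1 ≤ d) (R : Set (Fin m → ZMod 2)) :
    Set (Fin (m * d) → ZMod 2) :=
  { u | (fun i : Fin m => u (Fin.castLE (m_le_mul m d hd) i)) ∈ R }

/-- The identification `𝔽₂ⁿ → ℤ/2ⁿℤ` by binary expansion: `(a₀,…,a_{n-1}) ↦ ∑ aᵢ 2ⁱ`. -/
def vecToZMod (n : ℕ) (v : Fin n → ZMod 2) : ZMod (2 ^ n) :=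
  ∑ i : Fin n, ((v i).val : ZMod (2 ^ n)) * 2 ^ (i : ℕ)

/-- The inverse identification `ℤ/2ⁿℤ → 𝔽₂ⁿ`: the binary digits of the representative. -/
def zmodToVec (n : ℕ) (x : ZMod (2 ^ n)) : Fin n → ZMod 2 :=
  fun i => (((x.val / 2 ^ (i : ℕ)) % 2 : ℕ) : ZMod 2)

/-- Addition modulo `2ⁿ` transported to `𝔽₂ⁿ` via binary expansion: `v ⊞ k`. -/
def boxAdd (n : ℕ) (v k : Fin n → ZMod 2) : Fin n → ZMod 2 :=
  zmodToVec n (vecToZMod n v + vecToZMod n k)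

/-! ### Binary expansion -/

lemma digits_sum (n x : ℕ) :
    ∑ i ∈ Finset.range n, (x / 2 ^ i % 2) * 2 ^ i = x % 2 ^ n := by
  induction n with
  | zero => simp [Nat.mod_one]
  | succ n ih => rw [Finset.sum_range_succ, ih, Nat.mod_pow_succ]; ring

lemma vec_zmod (n : ℕ) (x : ZMod (2 ^ n)) : vecToZMod n (zmodToVec n x) = x := by
  have h : vecToZMod n (zmodToVec n x)
      = ((∑ i ∈ Finset.range n, (x.val / 2 ^ i % 2) * 2 ^ i : ℕ) : ZMod (2 ^ n)) := by
    rw [Finset.sum_range]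
    unfold vecToZMod zmodToVec
    push_cast
    refine Finset.sum_congr rfl fun i _ => ?_
    congr 1
    rw [ZMod.val_natCast, Nat.mod_mod]
  rw [h, digits_sum]
  simp

lemma vec_bij (n : ℕ) : Function.Bijective (vecToZMod n) := by
  have hs : Function.Surjective (vecToZMod n) := fun x => ⟨_, vec_zmod n x⟩
  exact hs.bijective_of_nat_card_le (by simp)

lemma zmod_vec (n : ℕ) (v : Fin n → ZMod 2) : zmodToVec n (vecToZMod n v) = v :=
  (vec_bij n).1 (vec_zmod n _)

lemma vec_boxAdd (n : ℕ) (v k : Fin n → ZMod 2) :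
    vecToZMod n (boxAdd n v k) = vecToZMod n v + vecToZMod n k := vec_zmod n _

/-- Two vectors agree on their first `t` coordinates exactly when the corresponding integers are
congruent modulo `2 ^ t`. -/
lemma dvd_iff (n t : ℕ) (ht : t ≤ n) (v w : Fin n → ZMod 2) :
    (2 ^ t : ZMod (2 ^ n)) ∣ vecToZMod n w - vecToZMod n v
      ↔ ∀ i : Fin n, (i : ℕ) < t → w i = v i := by
  constructor
  · rintro ⟨c, hc⟩ i hi
    have hd : 2 ^ t ∣ 2 ^ n := pow_dvd_pow 2 ht
    have key : (vecToZMod n w).val ≡ (vecToZMod n v).val [MOD 2 ^ t] := by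
      rw [← ZMod.natCast_eq_natCast_iff]
      have h2 := congrArg (ZMod.castHom hd (ZMod (2 ^ t))) hc
      have h3 : (2 : ZMod (2 ^ t)) ^ t = 0 := by exact_mod_cast ZMod.natCast_self (2 ^ t)
      rw [map_sub, map_mul, map_pow, map_ofNat, h3, zero_mul, sub_eq_zero] at h2
      simpa [ZMod.natCast_val] using h2
    rw [← zmod_vec n w, ← zmod_vec n v]
    have aux : ∀ x : ℕ, x / 2 ^ (i : ℕ) % 2 = (x % 2 ^ t) / 2 ^ (i : ℕ) % 2 := by
      intro x
      have := Nat.testBit_mod_two_pow x t i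
      simp only [hi, decide_true, Bool.true_and, Nat.testBit_eq_decide_div_mod_eq] at this
      have h4 := decide_eq_decide.mp this
      omega
    unfold zmodToVec
    rw [aux, key, ← aux]
  · intro h
    unfold vecToZMod
    rw [← Finset.sum_sub_distrib]
    refine Finset.dvd_sum fun i _ => ?_
    rcases lt_or_ge (i : ℕ) t with hi | hi
    · simp [h i hi]
    · rw [← sub_mul]
      exact Dvd.dvd.mul_left (pow_dvd_pow 2 hi) _

lemma subgroup_eq (n : ℕ) (H : AddSubgroup (ZMod (2 ^ n))) :
    ∃ t ≤ n, ∀ x, x ∈ H ↔ (2 ^ t : ZMod (2 ^ n)) ∣ x := by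
  obtain ⟨a, ha⟩ := Int.subgroup_cyclic (H.comap (Int.castAddHom (ZMod (2 ^ n))))
  rw [← AddSubgroup.zmultiples_eq_closure] at ha
  have hmem : ∀ z : ℤ, (z : ZMod (2 ^ n)) ∈ H ↔ a ∣ z := by
    intro z
    rw [← Int.mem_zmultiples_iff, ← ha]
    rfl
  have h0 : (2 ^ n : ZMod (2 ^ n)) = 0 := by exact_mod_cast ZMod.natCast_self (2 ^ n)
  have hn : a ∣ 2 ^ n := by
    rw [← hmem]
    push_cast
    rw [h0]
    exact H.zero_mem
  have hn' : a.natAbs ∣ 2 ^ n := by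
    have := Int.natAbs_dvd_natAbs.mpr hn
    simpa [Int.natAbs_pow] using this
  obtain ⟨t, ht, hat⟩ := (Nat.dvd_prime_pow Nat.prime_two).mp hn'
  have hm2 : ∀ z : ℤ, (z : ZMod (2 ^ n)) ∈ H ↔ (2 ^ t : ℤ) ∣ z := by
    intro z
    rw [hmem, ← Int.natAbs_dvd, hat]
    push_cast
    rfl
  refine ⟨t, ht, fun x => ?_⟩
  constructor
  · intro hx
    obtain ⟨z, rfl⟩ := ZMod.intCast_surjective x
    obtain ⟨c, rfl⟩ := (hm2 z).mp hx
    exact ⟨c, by push_cast; rfl⟩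
  · rintro ⟨c, rfl⟩
    obtain ⟨z, rfl⟩ := ZMod.intCast_surjective c
    have := (hm2 (2 ^ t * z)).mpr ⟨z, rfl⟩
    exact_mod_cast this

/-! ### Standard forms and their types -/

/-- The set of vectors agreeing with `v` on the first `t` coordinates. -/
def cyl (n t : ℕ) (v : Fin n → ZMod 2) : Set (Fin n → ZMod 2) :=
  {u | ∀ i : Fin n, (i : ℕ) < t → u i = v i}

lemma exists_brick (m δ : ℕ) (hm : 0 < m) (i : Fin (m * δ)) :
    ∃ (j : Fin δ) (k : Fin m), i = brickIdx m δ j k := by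
  refine ⟨⟨i / m, Nat.div_lt_of_lt_mul i.isLt⟩, ⟨i % m, Nat.mod_lt _ hm⟩, ?_⟩
  apply Fin.ext
  simp [brickIdx, Nat.div_add_mod]

lemma brick_ext (m δ : ℕ) (hm : 0 < m) (u v : Fin (m * δ) → ZMod 2)
    (h : ∀ j, brickProj m δ u j = brickProj m δ v j) : u = v := by
  ext i
  obtain ⟨j, k, rfl⟩ := exists_brick m δ hm i
  rw [show u (brickIdx m δ j k) = v (brickIdx m δ j k) from congrFun (h j) k]

lemma exists_of_bricks (m δ : ℕ) (hm : 0 < m) (f : Fin δ → Fin m → ZMod 2) :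
    ∃ v, ∀ j, brickProj m δ v j = f j := by
  refine ⟨fun i => f ⟨i / m, Nat.div_lt_of_lt_mul i.isLt⟩ ⟨i % m, Nat.mod_lt _ hm⟩, ?_⟩
  intro j
  ext k
  have h1 : (m * (j : ℕ) + k) / m = j := by
    rw [Nat.mul_add_div hm, Nat.div_eq_of_lt k.isLt, add_zero]
  have h2 : (m * (j : ℕ) + k) % m = k := by
    rw [Nat.mul_add_mod, Nat.mod_eq_of_lt k.isLt]
  simp [brickProj, brickIdx, h1, h2]

lemma not_white_univ (m : ℕ) (hm : 0 < m) : ¬ IsWhite (Set.univ : Set (Fin m → ZMod 2)) := by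
  rintro ⟨a, ha⟩
  have h0 : (0 : Fin m → ZMod 2) ∈ ({a} : Set _) := ha ▸ Set.mem_univ _
  have h1 : (1 : Fin m → ZMod 2) ∈ ({a} : Set _) := ha ▸ Set.mem_univ _
  have h2 : (0 : Fin m → ZMod 2) = 1 := h0.trans h1.symm
  exact zero_ne_one (congrFun h2 ⟨0, hm⟩)

/-- The kinds of the boxes of a set in standard form are those announced by its type. -/
lemma stdForm_kind (m δ : ℕ) (hm : 0 < m) (D : Set (Fin (m * δ) → ZMod 2)) (nw nr nb : ℕ)
    (h : StdForm m δ D nw nr nb) (j : Fin δ) :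
    (IsWhite (box m δ D j) ↔ (j : ℕ) < nw) ∧ (IsBlack (box m δ D j) ↔ nw + nr ≤ j) := by
  obtain ⟨hs, hr, w, R, hR, rfl⟩ := h
  obtain ⟨r, hr0⟩ : ∃ r, nr = 1 → r ∈ R := by
    by_cases h1 : nr = 1
    · obtain ⟨r, hr⟩ := Set.nonempty_of_ncard_ne_zero (s := R) (by have := (hR h1).1; omega)
      exact ⟨r, fun _ => hr⟩
    · exact ⟨0, fun h => absurd h h1⟩
  -- every value of the `j`-th brick allowed by the constraints on that brick is attained
  have hex : ∀ x : Fin m → ZMod 2, ((j : ℕ) < nw → x = w j) → (nr = 1 → (j : ℕ) = nw → x ∈ R) →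
      x ∈ box m δ (StdSet m δ nw nr w R) j := by
    intro x hx1 hx2
    obtain ⟨v, hv⟩ := exists_of_bricks m δ hm
      (fun j' => if j' = j then x else if (j' : ℕ) < nw then w j' else r)
    refine ⟨v, ⟨fun j' hj' => ?_, fun h1 j' hj' => ?_⟩, ?_⟩
    · rw [hv]
      split_ifs with e
      · subst e; exact hx1 hj'
      · rfl
    · rw [hv]
      split_ifs with e e2
      · subst e; exact hx2 h1 hj'
      · omega
      · exact hr0 h1
    · simp [hv]
  rcases lt_or_ge (j : ℕ) nw with hj | hj
  · have hb : box m δ (StdSet m δ nw nr w R) j = {w j} := by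
      ext x
      constructor
      · rintro ⟨v, hv, rfl⟩
        exact hv.1 j hj
      · rintro rfl
        exact hex _ (fun _ => rfl) (fun _ _ => by omega)
    rw [hb]
    refine ⟨⟨fun _ => hj, fun _ => ⟨_, rfl⟩⟩, ⟨fun h => ?_, fun _ => by omega⟩⟩
    exact absurd ⟨w j, h.symm⟩ (not_white_univ m hm)
  · rcases lt_or_ge (j : ℕ) (nw + nr) with hj2 | hj2
    · have h1 : nr = 1 := by omega
      have hjn : (j : ℕ) = nw := by omega
      have hb : box m δ (StdSet m δ nw nr w R) j = R := by
        ext x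
        constructor
        · rintro ⟨v, hv, rfl⟩
          exact hv.2 h1 j hjn
        · intro hx
          exact hex _ (fun _ => by omega) (fun _ _ => hx)
      rw [hb]
      refine ⟨⟨?_, fun _ => by omega⟩, ⟨?_, fun _ => by omega⟩⟩
      · rintro ⟨a, rfl⟩
        have := (hR h1).1
        simp at this
      · intro hu
        have h3 := (hR h1).2
        rw [show R = Set.univ from hu, Set.ncard_univ] at h3
        have : 0 < 2 ^ m := by positivity
        simp at h3
        omega
    · have hb : box m δ (StdSet m δ nw nr w R) j = Set.univ := by
        ext x
        simp only [Set.mem_univ, iff_true]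
        exact hex _ (fun _ => by omega) (fun _ _ => by omega)
      rw [hb]
      exact ⟨⟨fun h => absurd h (not_white_univ m hm), fun _ => by omega⟩,
        ⟨fun _ => hj2, fun _ => rfl⟩⟩

lemma stdForm_sameType (m δ : ℕ) (hm : 0 < m) (D E : Set (Fin (m * δ) → ZMod 2)) (nw nr nb : ℕ)
    (hD : StdForm m δ D nw nr nb) (hE : StdForm m δ E nw nr nb) : SameType m δ D E := by
  intro j
  have h1 := stdForm_kind m δ hm D nw nr nb hD j
  have h2 := stdForm_kind m δ hm E nw nr nb hE j
  exact ⟨h1.1.trans h2.1.symm, h1.2.trans h2.2.symm⟩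

lemma cyl_eq_stdSet (m δ t : ℕ) (hm : 0 < m) (ht : t < m * δ) (v : Fin (m * δ) → ZMod 2) :
    cyl (m * δ) t v = StdSet m δ (t / m) (if t % m = 0 then 0 else 1) (brickProj m δ v)
      {x | ∀ i : Fin m, (i : ℕ) < t % m →
        x i = brickProj m δ v ⟨t / m, Nat.div_lt_of_lt_mul ht⟩ i} := by
  have hdm := Nat.div_add_mod t m
  have hmod := Nat.mod_lt t hm
  ext u
  constructor
  · intro hu
    refine ⟨fun j hj => ?_, fun _ j hj => ?_⟩
    · ext i
      have : brickProj m δ u j i = brickProj m δ v j i := by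
        refine hu _ ?_
        have h1 : m * ((j : ℕ) + 1) ≤ m * (t / m) := Nat.mul_le_mul le_rfl hj
        have h2 := i.isLt
        have h3 : m * ((j : ℕ) + 1) = m * j + m := by ring
        simp only [brickIdx]
        omega
      rw [this]
    · intro i hi
      have hj' : j = ⟨t / m, Nat.div_lt_of_lt_mul ht⟩ := Fin.ext hj
      subst hj'
      refine hu _ ?_
      simp only [brickIdx]
      omega
  · rintro ⟨h1, h2⟩ i hi
    obtain ⟨j, k, rfl⟩ := exists_brick m δ hm i
    simp only [brickIdx] at hi
    rcases lt_or_ge (j : ℕ) (t / m) with hj | hj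
    · exact congrFun (h1 j hj) k
    · have hj' : (j : ℕ) = t / m := by
        refine le_antisymm ?_ hj
        rw [Nat.le_div_iff_mul_le hm, mul_comm]
        omega
      have hk : (k : ℕ) < t % m := by
        rw [hj'] at hi
        omega
      have hne : t % m ≠ 0 := by omega
      have h3 := h2 (by simp [hne]) j hj' k hk
      have hj'' : j = ⟨t / m, Nat.div_lt_of_lt_mul ht⟩ := Fin.ext hj'
      subst hj''
      exact h3

/-- The image of a cylinder under a parallel bijection is in standard form, of a type depending
only on the number of prescribed coordinates. -/
lemma image_stdForm (m δ t : ℕ) (hm : 0 < m) (ht : t < m * δ) (v : Fin (m * δ) → ZMod 2)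
    (γbrick : Fin δ → (Fin m → ZMod 2) → (Fin m → ZMod 2))
    (hγbij : ∀ j, Function.Bijective (γbrick j))
    (γ : (Fin (m * δ) → ZMod 2) → (Fin (m * δ) → ZMod 2))
    (hγ : ∀ v (j : Fin δ), brickProj m δ (γ v) j = γbrick j (brickProj m δ v j))
    (hsurj : Function.Surjective γ) :
    StdForm m δ (γ '' cyl (m * δ) t v) (t / m) (if t % m = 0 then 0 else 1)
      (δ - t / m - (if t % m = 0 then 0 else 1)) := by
  have hlt : t / m < δ := Nat.div_lt_of_lt_mul ht
  refine ⟨by split_ifs <;> omega, by split_ifs <;> omega,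
    fun j => γbrick j (brickProj m δ v j),
    γbrick ⟨t / m, hlt⟩ '' {x | ∀ i : Fin m, (i : ℕ) < t % m →
        x i = brickProj m δ v ⟨t / m, hlt⟩ i}, ?_, ?_⟩
  · intro h1
    have hne : t % m ≠ 0 := by
      intro h; simp [h] at h1
    have hmod := Nat.mod_lt t hm
    set y := brickProj m δ v ⟨t / m, hlt⟩
    rw [Set.ncard_image_of_injective _ (hγbij _).1]
    constructor
    · -- the last coordinate of the brick is free
      refine (Set.one_lt_ncard).mpr ⟨y, fun _ _ => rfl,
        Function.update y ⟨m - 1, by omega⟩ (y ⟨m - 1, by omega⟩ + 1), ?_, ?_⟩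
      · intro i hi
        rw [Function.update_of_ne]
        intro h
        rw [h] at hi
        simp only at hi
        omega
      · intro h
        have := congrFun h ⟨m - 1, by omega⟩
        simp at this
    · -- the first coordinate of the brick is prescribed
      have hlt2 := Set.ncard_lt_ncard (s := {x : Fin m → ZMod 2 | ∀ i : Fin m, (i : ℕ) < t % m →
        x i = y i}) (t := Set.univ) (by
          rw [Set.ssubset_univ_iff]
          intro h
          have h2 : (y + 1) ∈ {x : Fin m → ZMod 2 | ∀ i : Fin m, (i : ℕ) < t % m →
            x i = y i} := h ▸ Set.mem_univ _
          have := h2 ⟨0, hm⟩ (Nat.pos_of_ne_zero hne)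
          simp at this)
      rw [Set.ncard_univ] at hlt2
      simp at hlt2
      simp
      omega
  · rw [cyl_eq_stdSet m δ t hm ht v]
    ext u
    constructor
    · rintro ⟨x, hx, rfl⟩
      refine ⟨fun j hj => ?_, fun h1 j hj => ?_⟩
      · rw [hγ, hx.1 j hj]
      · have hj' : j = ⟨t / m, hlt⟩ := Fin.ext hj
        rw [hγ, hj']
        exact ⟨_, hx.2 h1 _ rfl, rfl⟩
    · rintro ⟨h1, h2⟩
      obtain ⟨x, rfl⟩ := hsurj u
      refine ⟨x, ⟨fun j hj => ?_, fun h3 j hj => ?_⟩, rfl⟩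
      · have := h1 j hj
        rw [hγ] at this
        exact (hγbij j).1 this
      · have hj' : j = ⟨t / m, hlt⟩ := Fin.ext hj
        have := h2 h3 j hj
        rw [hγ, hj'] at this
        obtain ⟨z, hz, hzx⟩ := this
        rw [hj', ← (hγbij _).1 hzx]
        exact hz

/-! ### Partitions invariant under translations -/

/-- A translation-invariant partition consists of the cylinders of a fixed depth. -/
lemma partition_cyl (n : ℕ) (B : Set (Set (Fin n → ZMod 2))) (hB : Setoid.IsPartition B)
    (hinv : ∀ k, ∀ b ∈ B, (fun v => boxAdd n v k) '' b ∈ B) :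
    ∃ t ≤ n, B = Set.range (cyl n t) := by
  have hclass : ∀ x, ∃ b ∈ B, x ∈ b := fun x => (hB.2 x).exists.imp fun b h => ⟨h.1, h.2⟩
  have huniq : ∀ x, ∀ b ∈ B, ∀ c ∈ B, x ∈ b → x ∈ c → b = c := fun x b hb c hc h1 h2 =>
    (hB.2 x).unique ⟨hb, h1⟩ ⟨hc, h2⟩
  let r : ZMod (2 ^ n) → ZMod (2 ^ n) → Prop :=
    fun x y => ∃ b ∈ B, zmodToVec n x ∈ b ∧ zmodToVec n y ∈ b
  have rrefl : ∀ x, r x x := fun x => by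
    obtain ⟨b, hb, hx⟩ := hclass (zmodToVec n x)
    exact ⟨b, hb, hx, hx⟩
  have rsymm : ∀ x y, r x y → r y x := fun x y ⟨b, hb, h1, h2⟩ => ⟨b, hb, h2, h1⟩
  have rtrans : ∀ x y z, r x y → r y z → r x z := by
    rintro x y z ⟨b, hb, h1, h2⟩ ⟨c, hc, h3, h4⟩
    obtain rfl := huniq _ b hb c hc h2 h3
    exact ⟨b, hb, h1, h4⟩
  have radd : ∀ x y k, r x y → r (x + k) (y + k) := by
    rintro x y k ⟨b, hb, h1, h2⟩
    refine ⟨_, hinv (zmodToVec n k) b hb, ⟨_, h1, ?_⟩, ⟨_, h2, ?_⟩⟩ <;>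
      simp [boxAdd, vec_zmod]
  let H : AddSubgroup (ZMod (2 ^ n)) :=
    { carrier := {x | r 0 x}
      zero_mem' := rrefl 0
      add_mem' := by
        intro a b ha hb
        have h := radd 0 a b ha
        rw [zero_add] at h
        exact rtrans _ _ _ hb h
      neg_mem' := by
        intro a ha
        have h := radd 0 a (-a) ha
        rw [zero_add, add_neg_cancel] at h
        exact rsymm _ _ h }
  have hr : ∀ x y, r x y ↔ y - x ∈ H := by
    intro x y
    constructor
    · intro h
      have h2 := radd _ _ (-x) h
      rw [add_neg_cancel, ← sub_eq_add_neg] at h2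
      exact h2
    · intro h
      have h2 := radd 0 (y - x) x h
      rw [zero_add, sub_add_cancel] at h2
      exact h2
  obtain ⟨t, ht, hH⟩ := subgroup_eq n H
  have hcyl : ∀ b ∈ B, ∀ v ∈ b, b = cyl n t v := by
    intro b hb v hv
    ext w
    have hw : w ∈ cyl n t v ↔ r (vecToZMod n v) (vecToZMod n w) := by
      rw [hr, hH, dvd_iff n t ht]
      rfl
    rw [hw]
    constructor
    · intro h
      exact ⟨b, hb, by rwa [zmod_vec], by rwa [zmod_vec]⟩
    · rintro ⟨c, hc, h1, h2⟩
      rw [zmod_vec] at h1 h2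
      rwa [huniq v b hb c hc hv h1]
  refine ⟨t, ht, ?_⟩
  ext b
  constructor
  · intro hb
    have hne : b.Nonempty := Set.nonempty_iff_ne_empty.mpr fun h => hB.1 (h ▸ hb)
    obtain ⟨v, hv⟩ := hne
    exact ⟨v, (hcyl b hb v hv).symm⟩
  · rintro ⟨v, rfl⟩
    obtain ⟨b, hb, hv⟩ := hclass v
    rwa [← hcyl b hb v hv]

/-- **primitivity of SPNmod.** Let `γ` be a parallel S-box whose bricks
`γ_j` are bijections of `𝔽₂^m` with `γ_j(0) ≠ 0`, and let `λ` be a bijective linear map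
preserving no non-trivial type.  Then the group generated by the round functions
`v ↦ λ(γ(v)) ⊞ k` is primitive: it acts transitively, and every invariant partition is
`{V}` or the singletons. -/
theorem stmt_17 (m δ : ℕ) (hm : 2 ≤ m) (hδ : 2 ≤ δ)
    (γbrick : Fin δ → (Fin m → ZMod 2) → (Fin m → ZMod 2))
    (hγbij : ∀ j, Function.Bijective (γbrick j))
    (hγ0 : ∀ j, γbrick j 0 ≠ 0)
    (γ : (Fin (m * δ) → ZMod 2) → (Fin (m * δ) → ZMod 2))
    (hγ : ∀ v (j : Fin δ), brickProj m δ (γ v) j = γbrick j (brickProj m δ v j))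
    (lam : (Fin (m * δ) → ZMod 2) →ₗ[ZMod 2] (Fin (m * δ) → ZMod 2))
    (hlam : Function.Bijective lam)
    (hntp : ∀ (D : Set (Fin (m * δ) → ZMod 2)) (nw nr nb : ℕ),
      StdForm m δ D nw nr nb → nw ≠ δ → nb ≠ δ →
      ¬ SameType m δ D ((fun v => lam v) '' D)) :
    (∀ v w : Fin (m * δ) → ZMod 2,
      ∃ g ∈ Subgroup.closure {g : Equiv.Perm (Fin (m * δ) → ZMod 2) |
          ∃ k, ∀ v, g v = boxAdd (m * δ) (lam (γ v)) k},
        g v = w) ∧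
    (∀ B : Set (Set (Fin (m * δ) → ZMod 2)), Setoid.IsPartition B →
      (∀ b ∈ B, ∀ g ∈ Subgroup.closure {g : Equiv.Perm (Fin (m * δ) → ZMod 2) |
          ∃ k, ∀ v, g v = boxAdd (m * δ) (lam (γ v)) k},
        (⇑g) '' b ∈ B) →
      B = {Set.univ} ∨
        B = Set.range fun v : Fin (m * δ) → ZMod 2 => ({v} : Set (Fin (m * δ) → ZMod 2))) := by
  have hm0 : 0 < m := by omega
  have hγinj : Function.Injective γ := by
    intro u v huv
    refine brick_ext m δ hm0 u v fun j => (hγbij j).1 ?_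
    rw [← hγ, ← hγ, huv]
  have hγsurj : Function.Surjective γ := Finite.surjective_of_injective hγinj
  have hround : Function.Bijective fun v => boxAdd (m * δ) (lam (γ v)) 0 := by
    rw [← Finite.injective_iff_bijective]
    intro u v huv
    have h := congrArg (vecToZMod (m * δ)) huv
    simp only [vec_boxAdd] at h
    exact hγinj (hlam.1 ((vec_bij _).1 (add_right_cancel h)))
  have hadd0 : ∀ v, boxAdd (m * δ) v 0 = v := by
    intro v
    apply (vec_bij _).1
    rw [vec_boxAdd]
    simp [vecToZMod]
  let g₀ : Equiv.Perm (Fin (m * δ) → ZMod 2) := Equiv.ofBijective _ hround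
  have hg₀ : ∀ v, g₀ v = lam (γ v) := fun v => hadd0 _
  have htransl : ∀ k, Function.Bijective fun v => boxAdd (m * δ) v k := by
    intro k
    rw [← Finite.injective_iff_bijective]
    intro u v huv
    have h := congrArg (vecToZMod (m * δ)) huv
    simp only [vec_boxAdd] at h
    exact (vec_bij _).1 (add_right_cancel h)
  let τ : (Fin (m * δ) → ZMod 2) → Equiv.Perm (Fin (m * δ) → ZMod 2) :=
    fun k => Equiv.ofBijective _ (htransl k)
  have hg₀mem : g₀ ∈ Subgroup.closure {g : Equiv.Perm (Fin (m * δ) → ZMod 2) |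
      ∃ k, ∀ v, g v = boxAdd (m * δ) (lam (γ v)) k} :=
    Subgroup.subset_closure ⟨0, fun _ => rfl⟩
  have hτmem : ∀ k, τ k ∈ Subgroup.closure {g : Equiv.Perm (Fin (m * δ) → ZMod 2) |
      ∃ k, ∀ v, g v = boxAdd (m * δ) (lam (γ v)) k} := by
    intro k
    have h : τ k * g₀ ∈ Subgroup.closure {g : Equiv.Perm (Fin (m * δ) → ZMod 2) |
        ∃ k, ∀ v, g v = boxAdd (m * δ) (lam (γ v)) k} := by
      refine Subgroup.subset_closure ⟨k, fun v => ?_⟩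
      rw [Equiv.Perm.mul_apply, hg₀]
      rfl
    exact (Subgroup.mul_mem_cancel_right _ hg₀mem).mp h
  refine ⟨fun v w => ?_, fun B hB hinv => ?_⟩
  · refine ⟨τ (zmodToVec _ (vecToZMod _ w - vecToZMod _ v)), hτmem _, ?_⟩
    apply (vec_bij _).1
    change vecToZMod _ (boxAdd _ _ _) = _
    rw [vec_boxAdd, vec_zmod, add_sub_cancel]
  obtain ⟨t, ht, rfl⟩ := partition_cyl (m * δ) B hB
    (fun k b hb => hinv b hb (τ k) (hτmem k))
  rcases Nat.eq_zero_or_pos t with rfl | htpos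
  · left
    have h : ∀ v, cyl (m * δ) 0 v = Set.univ := by
      intro v
      ext u
      simp [cyl]
    ext b
    simp [h, eq_comm]
  rcases ht.eq_or_lt with rfl | htlt
  · right
    congr 1
    funext v
    ext u
    simp [cyl, funext_iff]
  exfalso
  have hD := image_stdForm m δ t hm0 htlt 0 γbrick hγbij γ hγ hγsurj
  -- `g₀` maps the class of `0` to another class, namely the image under `lam` of `γ '' cyl _ t 0`
  obtain ⟨v, hv⟩ := hinv _ ⟨0, rfl⟩ g₀ hg₀mem
  have hE := image_stdForm m δ t hm0 htlt v (fun _ => id) (fun _ => Function.bijective_id) id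
    (fun _ _ => rfl) Function.surjective_id
  rw [Set.image_id, hv] at hE
  have himg : g₀ '' cyl (m * δ) t 0 = (fun v => lam v) '' (γ '' cyl (m * δ) t 0) := by
    rw [Set.image_image]
    exact Set.image_congr fun v _ => hg₀ v
  rw [himg] at hE
  have hlt : t / m < δ := Nat.div_lt_of_lt_mul htlt
  refine hntp _ _ _ _ hD hlt.ne ?_ (stdForm_sameType m δ hm0 _ _ _ _ _ hD hE)
  intro h
  split_ifs at h with h0
  · have h1 : t / m = 0 := by omega
    have := Nat.div_add_mod t m
    simp [h0, h1] at this
    omega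
  · generalize t / m = q at h
    omega
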